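/- arXiv:2512.14326 — 3 statements merged into one kernel-verified Lean document; each statement's English description precedes it below -/
import Mathlib

section
/- The following are equivalent for a universal class K: (i) K has the strong epimorphism surjectivity property; (ii) for every pair of finitely generated algebras A ≤ B with A, B ∈ K, the dominion d_K(A,B) equals A. Moreover, when K is a quasivariety, the algebra B in (ii) may additionally be assumed to be finitely presented in K. -/
namespace Impl

open FirstOrder Language

universe u v

/-- A bundled algebra (first-order structure) for the language `L`. -/
structure Alg (L : FirstOrder.Language.{u, u}) : Type (u + 1) where
  carrier : Type u
  [str : L.Structure carrier]

attribute [instance] Alg.str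

variable {L : FirstOrder.Language.{u, u}}

/-- The direct product of a family of algebras. -/
def Alg.pi {ι : Type u} (A : ι → Alg L) : Alg L where
  carrier := ∀ i, (A i).carrier
  str :=
    { funMap := fun {k} f v i => Structure.funMap f fun j => v j i
      RelMap := fun {k} r v => ∀ i, Structure.RelMap r fun j => v j i }

/-- The binary direct product of two algebras. -/
def Alg.prod (A B : Alg L) : Alg L where
  carrier := A.carrier × B.carrier
  str :=
    { funMap := fun {k} f v =>
        (Structure.funMap f fun j => (v j).1, Structure.funMap f fun j => (v j).2)
      RelMap := fun {k} r v =>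
        Structure.RelMap r (fun j => (v j).1) ∧ Structure.RelMap r fun j => (v j).2 }

/-- The ultraproduct of a family of algebras with respect to an ultrafilter. -/
def Alg.uprod {ι : Type u} (F : Ultrafilter ι) (A : ι → Alg L) : Alg L where
  carrier := Filter.Product (F : Filter ι) fun i => (A i).carrier
  str := inferInstance

/-- Closure under isomorphic copies. -/
def ClosedUnderIso (K : Set (Alg L)) : Prop :=
  ∀ A B : Alg L, A ∈ K → Nonempty (A.carrier ≃[L] B.carrier) → B ∈ K

/-- Closure under subalgebras (up to the identification of a subalgebra with an embedding). -/
def ClosedUnderSub (K : Set (Alg L)) : Prop :=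
  ∀ A B : Alg L, B ∈ K → Nonempty (A.carrier ↪[L] B.carrier) → A ∈ K

/-- Closure under direct products. -/
def ClosedUnderProd (K : Set (Alg L)) : Prop :=
  ∀ (ι : Type u) (A : ι → Alg L), (∀ i, A i ∈ K) → Alg.pi A ∈ K

/-- Closure under finite direct products. -/
def ClosedUnderFinProd (K : Set (Alg L)) : Prop :=
  ∀ (ι : Type u), Finite ι → ∀ A : ι → Alg L, (∀ i, A i ∈ K) → Alg.pi A ∈ K

/-- Closure under homomorphic images. -/
def ClosedUnderHomImg (K : Set (Alg L)) : Prop :=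
  ∀ A B : Alg L, A ∈ K → ∀ h : A.carrier →[L] B.carrier, Function.Surjective h → B ∈ K

/-- Closure under ultraproducts. -/
def ClosedUnderUprod (K : Set (Alg L)) : Prop :=
  ∀ (ι : Type u) (F : Ultrafilter ι) (A : ι → Alg L), (∀ i, A i ∈ K) → Alg.uprod F A ∈ K

/-- A universal class: a class closed under isomorphic copies, subalgebras and ultraproducts. -/
def IsUniversalClass (K : Set (Alg L)) : Prop :=
  ClosedUnderIso K ∧ ClosedUnderSub K ∧ ClosedUnderUprod K

/-- A quasivariety: a class closed under isomorphic copies, subalgebras, direct products and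
ultraproducts. -/
def IsQuasivariety (K : Set (Alg L)) : Prop :=
  ClosedUnderIso K ∧ ClosedUnderSub K ∧ ClosedUnderProd K ∧ ClosedUnderUprod K

/-- A variety: a class closed under homomorphic images, subalgebras and direct products. -/
def IsVariety (K : Set (Alg L)) : Prop :=
  ClosedUnderHomImg K ∧ ClosedUnderSub K ∧ ClosedUnderProd K

/-- The least quasivariety containing `K`. -/
def QGen (K : Set (Alg L)) : Set (Alg L) :=
  ⋂₀ { M : Set (Alg L) | IsQuasivariety M ∧ K ⊆ M }

/-- The least variety containing `K`. -/
def VGen (K : Set (Alg L)) : Set (Alg L) :=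
  ⋂₀ { M : Set (Alg L) | IsVariety M ∧ K ⊆ M }

/-- An elementary class: the class of all models of some first-order theory. -/
def IsElementary (K : Set (Alg L)) : Prop :=
  ∃ T : L.Theory, ∀ A : Alg L, A ∈ K ↔ ∀ φ ∈ T, A.carrier ⊨ φ

/-- Finite conjunctions of equations (with `⊤` as the empty conjunction). -/
inductive IsConjEq {α : Type v} : ∀ {k : ℕ}, L.BoundedFormula α k → Prop
  | top {k} : IsConjEq (⊤ : L.BoundedFormula α k)
  | equal {k} (t₁ t₂ : L.Term (α ⊕ Fin k)) : IsConjEq (BoundedFormula.equal t₁ t₂)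
  | inf {k} {φ ψ : L.BoundedFormula α k} : IsConjEq φ → IsConjEq ψ → IsConjEq (φ ⊓ ψ)

/-- Positive quantifier-free formulas: built from equations, `⊤` and `⊥` using `⊓` and `⊔`. -/
inductive IsPosQF {α : Type v} : ∀ {k : ℕ}, L.BoundedFormula α k → Prop
  | falsum {k} : IsPosQF (⊥ : L.BoundedFormula α k)
  | top {k} : IsPosQF (⊤ : L.BoundedFormula α k)
  | equal {k} (t₁ t₂ : L.Term (α ⊕ Fin k)) : IsPosQF (BoundedFormula.equal t₁ t₂)
  | inf {k} {φ ψ : L.BoundedFormula α k} : IsPosQF φ → IsPosQF ψ → IsPosQF (φ ⊓ ψ)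
  | sup {k} {φ ψ : L.BoundedFormula α k} : IsPosQF φ → IsPosQF ψ → IsPosQF (φ ⊔ ψ)

/-- Primitive positive (pp) formulas: existentially quantified finite conjunctions of
equations. -/
inductive IsPP {α : Type v} : ∀ {k : ℕ}, L.BoundedFormula α k → Prop
  | of_conjEq {k} {φ : L.BoundedFormula α k} : IsConjEq φ → IsPP φ
  | ex {k} {φ : L.BoundedFormula α (k + 1)} : IsPP φ → IsPP φ.ex

/-- Existential positive formulas: existentially quantified positive quantifier-free
formulas. -/
inductive IsExistPos {α : Type v} : ∀ {k : ℕ}, L.BoundedFormula α k → Prop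
  | of_posQF {k} {φ : L.BoundedFormula α k} : IsPosQF φ → IsExistPos φ
  | ex {k} {φ : L.BoundedFormula α (k + 1)} : IsExistPos φ → IsExistPos φ.ex

/-- Two formulas are equivalent in a class of algebras. -/
def EquivOn (K : Set (Alg L)) {α : Type v} (φ ψ : L.Formula α) : Prop :=
  ∀ A : Alg L, A ∈ K → ∀ x : α → A.carrier, φ.Realize x ↔ ψ.Realize x

/-- A formula is preserved by homomorphisms in `K`. -/
def PreservedByHomsOn (K : Set (Alg L)) {α : Type v} (φ : L.Formula α) : Prop :=
  ∀ A B : Alg L, A ∈ K → B ∈ K → ∀ (h : A.carrier →[L] B.carrier) (x : α → A.carrier),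
    φ.Realize x → φ.Realize fun a => h (x a)

/-- A formula is preserved by direct products in `K`. -/
def PreservedByProdsOn (K : Set (Alg L)) {α : Type v} (φ : L.Formula α) : Prop :=
  ∀ (ι : Type u) (A : ι → Alg L), (∀ i, A i ∈ K) → ∀ x : α → (Alg.pi A).carrier,
    (∀ i, φ.Realize fun a => x a i) → φ.Realize x

/-- An `n`-ary partial function on a class of algebras `K`: a family assigning to each member of
`K` an `n`-ary partial function on its carrier. -/
def PartialFunOn (K : Set (Alg L)) (n : ℕ) :=
  ∀ (A : Alg L), A ∈ K → ((Fin n → A.carrier) →. A.carrier)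

/-- A partial function on `K` is defined by the formula `φ(x₁, …, xₙ, y)` (the last variable
being the output) when its graph on each member of `K` is the solution set of `φ`. -/
def DefinedBy {K : Set (Alg L)} {n : ℕ} (f : PartialFunOn K n)
    (φ : L.Formula (Fin (n + 1))) : Prop :=
  ∀ (A : Alg L) (hA : A ∈ K) (x : Fin n → A.carrier) (b : A.carrier),
    b ∈ f A hA x ↔ φ.Realize (Fin.snoc x b)

/-- The formula `φ(x₁, …, xₙ, y)` is functional in `K`: for all inputs there is at most one
output satisfying it. -/
def FunctionalIn (K : Set (Alg L)) {n : ℕ} (φ : L.Formula (Fin (n + 1))) : Prop :=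
  ∀ A : Alg L, A ∈ K → ∀ (x : Fin n → A.carrier) (b₁ b₂ : A.carrier),
    φ.Realize (Fin.snoc x b₁) → φ.Realize (Fin.snoc x b₂) → b₁ = b₂

/-- A partial function on `K` is an operation of `K` when it is preserved by all homomorphisms
between members of `K`. -/
def IsOperationOn {K : Set (Alg L)} {n : ℕ} (f : PartialFunOn K n) : Prop :=
  ∀ (A B : Alg L) (hA : A ∈ K) (hB : B ∈ K) (h : A.carrier →[L] B.carrier)
    (x : Fin n → A.carrier) (b : A.carrier),
    b ∈ f A hA x → h b ∈ f B hB fun i => h (x i)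

/-- A partial function on `K` is implicit when it is defined by some formula. -/
def IsImplicit {K : Set (Alg L)} {n : ℕ} (f : PartialFunOn K n) : Prop :=
  ∃ φ : L.Formula (Fin (n + 1)), DefinedBy f φ

/-- An implicit operation of `K`: a partial function that is both implicit and an operation. -/
def IsImplicitOp {K : Set (Alg L)} {n : ℕ} (f : PartialFunOn K n) : Prop :=
  IsImplicit f ∧ IsOperationOn f

/-- An implicit operation is extendable when every tuple in every member of `K` lies in the
domain of the operation in some extension inside `K`. -/
def Extendable {K : Set (Alg L)} {n : ℕ} (f : PartialFunOn K n) : Prop :=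
  ∀ (A : Alg L) (hA : A ∈ K) (x : Fin n → A.carrier),
    ∃ (B : Alg L) (hB : B ∈ K) (e : A.carrier ↪[L] B.carrier),
      (f B hB fun i => e (x i)).Dom

/-- The dominion of a subset `s` of `M` relative to the class `K`. -/
def dominion (K : Set (Alg L)) (M : Type u) [L.Structure M] (s : Set M) : Set M :=
  { b | ∀ C : Alg L, C ∈ K → ∀ g h : M →[L] C.carrier, (∀ a ∈ s, g a = h a) → g b = h b }

/-- The strong epimorphism surjectivity property. -/
def StrongES (K : Set (Alg L)) : Prop :=
  ∀ (A B : Alg L), A ∈ K → B ∈ K → ∀ (f : A.carrier →[L] B.carrier) (b : B.carrier),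
    b ∉ Set.range f →
      ∃ C : Alg L, C ∈ K ∧ ∃ g h : B.carrier →[L] C.carrier,
        (∀ a : A.carrier, g (f a) = h (f a)) ∧ g b ≠ h b

/-- The weak epimorphism surjectivity property: every `K`-epimorphism between finitely
generated members of `K` is surjective. -/
def WeakES (K : Set (Alg L)) : Prop :=
  ∀ (A B : Alg L), A ∈ K → B ∈ K →
    Structure.FG L A.carrier → Structure.FG L B.carrier →
      ∀ f : A.carrier →[L] B.carrier,
        (∀ C : Alg L, C ∈ K → ∀ g h : B.carrier →[L] C.carrier,
          (∀ a : A.carrier, g (f a) = h (f a)) → g = h) →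
        Function.Surjective f

/-- The amalgamation property. -/
def HasAmalgamation (K : Set (Alg L)) : Prop :=
  ∀ (A B C : Alg L), A ∈ K → B ∈ K → C ∈ K →
    ∀ (f : A.carrier ↪[L] B.carrier) (g : A.carrier ↪[L] C.carrier),
      ∃ D : Alg L, D ∈ K ∧ ∃ (f' : B.carrier ↪[L] D.carrier) (g' : C.carrier ↪[L] D.carrier),
        ∀ a : A.carrier, f' (f a) = g' (g a)

/-- A finitely presented member of `K`: an algebra in `K` with a finite presentation, phrased
through the usual universal property of `T(X)/Cg_K(Y)`. -/
def FinitelyPresentedIn (K : Set (Alg L)) (B : Alg L) : Prop :=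
  B ∈ K ∧ ∃ (m : ℕ) (Y : Finset (L.Term (Fin m) × L.Term (Fin m))) (b : Fin m → B.carrier),
    Substructure.closure L (Set.range b) = ⊤ ∧
    (∀ p ∈ Y, p.1.realize b = p.2.realize b) ∧
    ∀ C : Alg L, C ∈ K → ∀ x : Fin m → C.carrier,
      (∀ p ∈ Y, p.1.realize x = p.2.realize x) →
        ∃ g : B.carrier →[L] C.carrier, ∀ i, g (b i) = x i

/-- Subdirectly irreducible relative to `K`. -/
def IsRSI (K : Set (Alg L)) (A : Alg L) : Prop :=
  A ∈ K ∧ ∀ (ι : Type u) (B : ι → Alg L), (∀ i, B i ∈ K) →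
    ∀ h : A.carrier ↪[L] (Alg.pi B).carrier,
      (∀ i, Function.Surjective fun a => h a i) →
        ∃ i, Function.Bijective fun a => h a i

/-- Finitely subdirectly irreducible relative to `K`. -/
def IsRFSI (K : Set (Alg L)) (A : Alg L) : Prop :=
  A ∈ K ∧ ∀ (ι : Type u), Finite ι → ∀ B : ι → Alg L, (∀ i, B i ∈ K) →
    ∀ h : A.carrier ↪[L] (Alg.pi B).carrier,
      (∀ i, Function.Surjective fun a => h a i) →
        ∃ i, Function.Bijective fun a => h a i

/-- A congruence on an algebra: an equivalence relation compatible with all the operations. -/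
def IsCongruenceOn (A : Alg L) (θ : A.carrier → A.carrier → Prop) : Prop :=
  Equivalence θ ∧
    ∀ (k : ℕ) (f : L.Functions k) (x y : Fin k → A.carrier),
      (∀ i, θ (x i) (y i)) → θ (Structure.funMap f x) (Structure.funMap f y)

/-- The quotient of an algebra by (the setoid of) an equivalence relation; when the relation is
a congruence this is the quotient algebra. -/
noncomputable def Alg.quot (A : Alg L) (θ : A.carrier → A.carrier → Prop) (h : Equivalence θ) :
    Alg L where
  carrier := Quotient (⟨θ, h⟩ : Setoid A.carrier)
  str :=
    { funMap := fun {k} f v => Quotient.mk _ (Structure.funMap f fun i => (v i).out)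
      RelMap := fun {k} r v => Structure.RelMap r fun i => (v i).out }

/-- A `K`-congruence of `A`: a congruence whose quotient lies in `K`. -/
def IsRelCong (K : Set (Alg L)) (A : Alg L) (θ : A.carrier → A.carrier → Prop) : Prop :=
  ∃ h : IsCongruenceOn A θ, Alg.quot A θ h.1 ∈ K

/-- The join of two relations in the lattice of `K`-congruences of `A`. -/
def relCongJoin (K : Set (Alg L)) (A : Alg L)
    (θ φ : A.carrier → A.carrier → Prop) (x y : A.carrier) : Prop :=
  ∀ ρ : A.carrier → A.carrier → Prop, IsRelCong K A ρ →
    (∀ a b, θ a b → ρ a b) → (∀ a b, φ a b → ρ a b) → ρ x y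

/-- Relative congruence distributivity: the lattice of `K`-congruences of each member of `K`
is distributive. -/
def RelCongDistributive (K : Set (Alg L)) : Prop :=
  ∀ A : Alg L, A ∈ K → ∀ θ φ ψ : A.carrier → A.carrier → Prop,
    IsRelCong K A θ → IsRelCong K A φ → IsRelCong K A ψ →
      ∀ x y : A.carrier,
        (θ x y ∧ relCongJoin K A φ ψ x y) ↔
          relCongJoin K A (fun a b => θ a b ∧ φ a b) (fun a b => θ a b ∧ ψ a b) x y

/-- The join of two relations in the lattice of congruences of `A`. -/
def congJoin (A : Alg L) (θ φ : A.carrier → A.carrier → Prop) (x y : A.carrier) : Prop :=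
  ∀ ρ : A.carrier → A.carrier → Prop, IsCongruenceOn A ρ →
    (∀ a b, θ a b → ρ a b) → (∀ a b, φ a b → ρ a b) → ρ x y

/-- Congruence permutability for all members of a class. -/
def CongPermutableClass (K : Set (Alg L)) : Prop :=
  ∀ A : Alg L, A ∈ K → ∀ θ φ : A.carrier → A.carrier → Prop,
    IsCongruenceOn A θ → IsCongruenceOn A φ →
      ∀ x y : A.carrier, (∃ z, θ x z ∧ φ z y) ↔ ∃ z, φ x z ∧ θ z y

/-- Congruence distributivity for all members of a class. -/
def CongDistributiveClass (K : Set (Alg L)) : Prop :=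
  ∀ A : Alg L, A ∈ K → ∀ θ φ ψ : A.carrier → A.carrier → Prop,
    IsCongruenceOn A θ → IsCongruenceOn A φ → IsCongruenceOn A ψ →
      ∀ x y : A.carrier,
        (θ x y ∧ congJoin A φ ψ x y) ↔
          congJoin A (fun a b => θ a b ∧ φ a b) (fun a b => θ a b ∧ ψ a b) x y

/-- The congruence extension property. -/
def HasCEP (K : Set (Alg L)) : Prop :=
  ∀ A B : Alg L, A ∈ K → B ∈ K → ∀ e : A.carrier ↪[L] B.carrier,
    ∀ θ : A.carrier → A.carrier → Prop, IsCongruenceOn A θ →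
      ∃ ρ : B.carrier → B.carrier → Prop, IsCongruenceOn B ρ ∧
        ∀ x y : A.carrier, θ x y ↔ ρ (e x) (e y)

/-- The language consisting of one new function symbol `gᵢ` of arity `ar i` for each `i`. -/
def newLang {ι : Type u} (ar : ι → ℕ) : FirstOrder.Language.{u, u} where
  Functions := fun n => { i : ι // ar i = n }
  Relations := fun _ => PEmpty

/-- The `L`-reduct of an algebra in an expanded language `L.sum N`. -/
def algReduct {N : FirstOrder.Language.{u, u}} (B : Alg (L.sum N)) : Alg L where
  carrier := B.carrier
  str := (LHom.sumInl : L →ᴸ L.sum N).reduct B.carrier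

/-- The class `K[L_F]` of expansions of members of `K` on which each operation in the family
`f` is total, interpreting the new symbol `gᵢ` as `f i`. -/
def expClass (K : Set (Alg L)) {ι : Type u} (ar : ι → ℕ)
    (f : ∀ i, PartialFunOn K (ar i)) : Set (Alg (L.sum (newLang ar))) :=
  { B | ∃ hB : algReduct B ∈ K,
      ∀ (i : ι) (x : Fin (ar i) → B.carrier),
        Structure.funMap (L := L.sum (newLang ar)) (M := B.carrier)
            (Sum.inr ⟨i, rfl⟩ : (L.sum (newLang ar)).Functions (ar i)) x
          ∈ f i (algReduct B) hB x }

/-- Closure under subalgebras (and isomorphic copies) inside a fixed language. -/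
def SClosure {L' : FirstOrder.Language.{u, u}} (S : Set (Alg L')) : Set (Alg L') :=
  { A | ∃ B ∈ S, Nonempty (A.carrier ↪[L'] B.carrier) }

/-- Membership in `ext_pp(K)`: an extendable implicit operation defined by a pp formula. -/
def InExtPP {K : Set (Alg L)} {n : ℕ} (f : PartialFunOn K n) : Prop :=
  IsOperationOn f ∧ (∃ φ : L.Formula (Fin (n + 1)), IsPP φ ∧ DefinedBy f φ) ∧ Extendable f

/-- `M` is the pp expansion of `K` induced by the family `f` of extendable pp-definable
implicit operations, with one new symbol of arity `ar i` for each `i`. -/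
def IsPPExpansionVia (K : Set (Alg L)) {ι : Type u} (ar : ι → ℕ)
    (f : ∀ i, PartialFunOn K (ar i)) (M : Set (Alg (L.sum (newLang ar)))) : Prop :=
  (∀ i, 0 < ar i) ∧ (∀ i, InExtPP (f i)) ∧ M = SClosure (expClass K ar f)

/-- Every implicit operation of `K` is interpolated in `M` by a set of terms of the expanded
language. -/
def InterpolatesByTermsInExp (K : Set (Alg L)) {ι : Type u} {ar : ι → ℕ}
    (M : Set (Alg (L.sum (newLang ar)))) : Prop :=
  ∀ n : ℕ, 0 < n → ∀ g : PartialFunOn K n, IsImplicitOp g →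
    ∃ T : Set ((L.sum (newLang ar)).Term (Fin n)),
      ∀ A : Alg (L.sum (newLang ar)), A ∈ M →
        ∀ (hA : algReduct A ∈ K) (x : Fin n → A.carrier) (b : A.carrier),
          b ∈ g (algReduct A) hA x → ∃ t ∈ T, t.realize x = b

/-- `M` is a Beth companion of `K` (via the given expansion datum). -/
def IsBethCompanionVia (K : Set (Alg L)) {ι : Type u} (ar : ι → ℕ)
    (f : ∀ i, PartialFunOn K (ar i)) (M : Set (Alg (L.sum (newLang ar)))) : Prop :=
  IsPPExpansionVia K ar f M ∧ InterpolatesByTermsInExp K M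

/-- A pp expansion is congruence preserving when the `M`-congruences of each member of `M`
coincide with the `K`-congruences of its `L`-reduct. -/
def CongPreserving {N : FirstOrder.Language.{u, u}} (K : Set (Alg L))
    (M : Set (Alg (L.sum N))) : Prop :=
  ∀ A : Alg (L.sum N), A ∈ M → ∀ θ : A.carrier → A.carrier → Prop,
    IsRelCong M A θ ↔ IsRelCong K (algReduct A) θ

/-- Reinterpretation of an `L₁`-algebra as an `L₂`-algebra along a map sending `L₂`-symbols to
`L₁`-terms (both languages are assumed to be purely functional). -/
def reinterpret {L₁ L₂ : FirstOrder.Language.{u, u}} (ρ : ∀ n, L₂.Functions n → L₁.Term (Fin n))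
    (A : Alg L₁) : Alg L₂ where
  carrier := A.carrier
  str :=
    { funMap := fun {k} s x => (ρ k s).realize x
      RelMap := fun {k} _ _ => False }

/-- Two expansions of the same base language `L` are faithfully term equivalent relative to
`L`. -/
def FaithfullyTermEquivRel (L : FirstOrder.Language.{u, u}) {N₁ N₂ : FirstOrder.Language.{u, u}}
    (M₁ : Set (Alg (L.sum N₁))) (M₂ : Set (Alg (L.sum N₂))) : Prop :=
  ∃ (τ : ∀ n, (L.sum N₁).Functions n → (L.sum N₂).Term (Fin n))
    (ρ : ∀ n, (L.sum N₂).Functions n → (L.sum N₁).Term (Fin n)),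
    (∀ (n : ℕ) (s : L.Functions n),
      τ n (Sum.inl s) = Term.func (Sum.inl s : (L.sum N₂).Functions n) Term.var) ∧
    (∀ (n : ℕ) (s : L.Functions n),
      ρ n (Sum.inl s) = Term.func (Sum.inl s : (L.sum N₁).Functions n) Term.var) ∧
    (∀ A : Alg (L.sum N₁), A ∈ M₁ → reinterpret ρ A ∈ M₂) ∧
    (∀ B : Alg (L.sum N₂), B ∈ M₂ → reinterpret τ B ∈ M₁) ∧
    (∀ A : Alg (L.sum N₁), A ∈ M₁ → reinterpret τ (reinterpret ρ A) = A) ∧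
    (∀ B : Alg (L.sum N₂), B ∈ M₂ → reinterpret ρ (reinterpret τ B) = B)

/-!
Strong epimorphism surjectivity says that every subalgebra `A` of every `B ∈ K` is its own
dominion. Suppose this is known only when `A` is finitely generated and `B` ranges over a class
`𝒬` of small algebras, and let `b ∈ B ∖ A`. A finite part of the operation tables of `B` lives
on a finite subset, which lifts to some `P ∈ 𝒬` equipped with a homomorphism `π : P → B`. The lift
of `b` avoids the subalgebra generated by the lift of the finite part of `A`, since `π` maps that
subalgebra into `A`; hence some pair of homomorphisms out of `P` agrees on that subalgebra but not
at the lift of `b`. Pulled back to `B`, these pairs become maps that respect larger and larger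
finite parts of the operation tables, and an ultraproduct turns them into a pair of homomorphisms
out of `B` that agree on `A` but not at `b`.

For a universal class, `𝒬` consists of the finitely generated members. For a quasivariety, it
consists of the finitely presented ones: take the finitely many elements involved as generators
and the finitely many entries of the operation tables as relations.
-/

open Structure Filter

section OperationInstances

/-- An instance `f(x₁, …, xₖ)` of a basic operation on `M`: one entry of the operation tables. -/
structure OpInst (L : FirstOrder.Language.{u, u}) (M : Type v) : Type (max u v) where
  arity : ℕ
  symbol : L.Functions arity
  args : Fin arity → M

namespace OpInst

variable {M N P : Type*} [L.Structure M] [L.Structure N] [L.Structure P]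

/-- The value in `M` of an operation instance. -/
def value (q : OpInst L M) : M :=
  funMap q.symbol q.args

/-- The map `g`, which need not be a homomorphism, respects the operation at the single
instance `q`. -/
def IsPreservedBy (q : OpInst L M) (g : M → N) : Prop :=
  g q.value = funMap q.symbol (g ∘ q.args)

theorem IsPreservedBy.hom_comp {q : OpInst L M} {g : M → N} (hq : q.IsPreservedBy g)
    (h : N →[L] P) : q.IsPreservedBy (h ∘ g) :=
  (congrArg h hq).trans (h.map_fun q.symbol (g ∘ q.args))

theorem exists_tuple_covering (V : Finset M) (E : Finset (OpInst L M)) :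
    ∃ (m : ℕ) (β : Fin m → M), (V : Set M) ⊆ Set.range β ∧
      ∀ q ∈ E, q.value ∈ Set.range β ∧ Set.range q.args ⊆ Set.range β := by
  have hfin : (V ∪ ⋃ q ∈ E, insert q.value (Set.range q.args) : Set M).Finite :=
    V.finite_toSet.union (E.finite_toSet.biUnion fun q _ => (Set.finite_range q.args).insert _)
  obtain ⟨m, β, -, hβ⟩ := hfin.fin_param
  have hE : ∀ q ∈ E, insert q.value (Set.range q.args) ⊆ Set.range β := fun q hq =>
    hβ ▸ (Set.subset_biUnion_of_mem (u := fun q : OpInst L M =>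
      insert q.value (Set.range q.args)) hq).trans Set.subset_union_right
  exact ⟨m, β, hβ ▸ Set.subset_union_left, fun q hq => Set.insert_subset_iff.1 (hE q hq)⟩

end OpInst

end OperationInstances

section Ultraproducts

variable [L.IsAlgebraic] {ι M : Type*} {N : ι → Type*} [L.Structure M] [∀ i, L.Structure (N i)]
  {F : Ultrafilter ι}

/-- The homomorphism into an ultraproduct induced by a family of maps, under the sole condition
that each operation instance is preserved by almost all of them. -/
def ultraproductHom (g : ∀ i, M → N i)
    (hg : ∀ q : OpInst L M, ∀ᶠ i in (F : Filter ι), q.IsPreservedBy (g i)) :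
    M →[L] (F : Filter ι).Product N where
  toFun y := Quotient.mk'' fun i => g i y
  map_fun' f x :=
    (Quotient.sound' (hg ⟨_, f, x⟩)).trans
      (Ultraproduct.funMap_cast (u := F) f fun j i => g i (x j)).symm
  map_rel' r := isEmptyElim r

theorem ultraproductHom_apply_eq_iff {g h : ∀ i, M → N i}
    {hg : ∀ q : OpInst L M, ∀ᶠ i in (F : Filter ι), q.IsPreservedBy (g i)}
    {hh : ∀ q : OpInst L M, ∀ᶠ i in (F : Filter ι), q.IsPreservedBy (h i)} {y z : M} :
    ultraproductHom g hg y = ultraproductHom h hh z ↔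
      ∀ᶠ i in (F : Filter ι), g i y = h i z :=
  Quotient.eq''

end Ultraproducts

section Dominions

variable {K : Set (Alg L)}

theorem notMem_dominion_iff {M : Type u} [L.Structure M] {s : Set M} {b : M} :
    b ∉ dominion K M s ↔
      ∃ C ∈ K, ∃ g h : M →[L] C.carrier, Set.EqOn g h s ∧ g b ≠ h b := by
  simp only [dominion, Set.mem_ofPred_eq, not_forall, exists_prop, Set.EqOn, ne_eq]

theorem subset_dominion {M : Type u} [L.Structure M] (s : Set M) : s ⊆ dominion K M s :=
  fun b hb _ _ _ _ hgh => hgh b hb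

theorem ClosedUnderSub.mk_mem (hS : ClosedUnderSub K) {B : Alg L} (hB : B ∈ K)
    (N : L.Substructure B.carrier) : Alg.mk N ∈ K :=
  hS (Alg.mk N) B hB ⟨N.subtype⟩

theorem strongES_iff_dominion_eq (hS : ClosedUnderSub K) :
    StrongES K ↔ ∀ B ∈ K, ∀ A : L.Substructure B.carrier,
      dominion K B.carrier (A : Set B.carrier) = A := by
  constructor
  · intro hES B hB A
    refine Set.Subset.antisymm (fun b hb => ?_) (subset_dominion _)
    by_contra hbA
    have hb_range : b ∉ Set.range A.subtype.toHom := by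
      rintro ⟨a, rfl⟩
      exact hbA a.2
    obtain ⟨C, hC, g, h, hgh, hne⟩ :=
      hES (Alg.mk A) B (hS.mk_mem hB A) hB A.subtype.toHom b hb_range
    exact hne (hb C hC g h fun a ha => hgh ⟨a, ha⟩)
  · intro hdom A B _ hB f b hb
    have hb_dom : b ∉ dominion K B.carrier (f.range : Set B.carrier) := by
      rwa [hdom B hB f.range, Hom.range_coe]
    obtain ⟨C, hC, g, h, hgh, hne⟩ := notMem_dominion_iff.1 hb_dom
    exact ⟨C, hC, g, h, fun a => hgh (f.mem_range_self a), hne⟩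

theorem notMem_dominion_of_finite_approx [L.IsAlgebraic] (hU : ClosedUnderUprod K)
    {M : Type u} [L.Structure M] {s : Set M} {b : M}
    (hloc : ∀ (V : Finset M) (E : Finset (OpInst L M)), ∃ C ∈ K, ∃ g h : M → C.carrier,
      (∀ q ∈ E, q.IsPreservedBy g) ∧ (∀ q ∈ E, q.IsPreservedBy h) ∧
        Set.EqOn g h (V ∩ s) ∧ g b ≠ h b) :
    b ∉ dominion K M s := by
  classical
  choose C hC g h hg hh heq hne using
    fun i : Finset M × Finset (OpInst L M) => hloc i.1 i.2
  let F : Ultrafilter (Finset M × Finset (OpInst L M)) := Ultrafilter.of atTop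
  have eventually_ge (i₀) : ∀ᶠ i : Finset M × Finset (OpInst L M) in F, i₀ ≤ i :=
    Ultrafilter.of_le atTop (eventually_ge_atTop i₀)
  have eventually_mem_elements (a : M) : ∀ᶠ i : Finset M × Finset (OpInst L M) in F, a ∈ i.1 :=
    (eventually_ge ({a}, ∅)).mono fun i hi => Finset.singleton_subset_iff.1 hi.1
  have eventually_mem_instances (q : OpInst L M) :
      ∀ᶠ i : Finset M × Finset (OpInst L M) in F, q ∈ i.2 :=
    (eventually_ge (∅, {q})).mono fun i hi => Finset.singleton_subset_iff.1 hi.2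
  refine notMem_dominion_iff.2 ⟨Alg.uprod F C, hU _ F C hC,
    ultraproductHom g fun q => (eventually_mem_instances q).mono fun i => hg i q,
    ultraproductHom h fun q => (eventually_mem_instances q).mono fun i => hh i q, ?_, ?_⟩
  · intro a ha
    exact ultraproductHom_apply_eq_iff.2 <|
      (eventually_mem_elements a).mono fun i hi => heq i ⟨hi, ha⟩
  · intro hgb
    obtain ⟨i, hi⟩ := (ultraproductHom_apply_eq_iff.1 hgb).exists
    exact hne i hi

end Dominions

section LocalApproximation

variable {K : Set (Alg L)}

/-- Every finite part of the structure of `B` lifts along a homomorphism `π : P → B` from a member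
`P` of `𝒬`. The lift `ρ` is a total function whose values matter only on that finite part; asking
`V` to be nonempty leaves room for such a function when `P` would otherwise be empty. -/
def LocallyApproximatedBy (𝒬 : Set (Alg L)) (B : Alg L) : Prop :=
  ∀ (V : Finset B.carrier) (E : Finset (OpInst L B.carrier)), V.Nonempty →
    ∃ P ∈ 𝒬, ∃ (ρ : B.carrier → P.carrier) (π : P.carrier →[L] B.carrier),
      (∀ y ∈ V, π (ρ y) = y) ∧ ∀ q ∈ E, q.IsPreservedBy ρ

theorem notMem_closure_of_hom {M N : Type*} [L.Structure M] [L.Structure N] (π : N →[L] M)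
    {A : L.Substructure M} {s : Set N} (hs : Set.MapsTo π s A) {c : N} (hc : π c ∉ A) :
    c ∉ Substructure.closure L s :=
  fun hmem => hc ((Substructure.closure_le (S := A.comap π)).2 hs hmem)

theorem LocallyApproximatedBy.dominion_eq [L.IsAlgebraic] (hU : ClosedUnderUprod K)
    {𝒬 : Set (Alg L)} {B : Alg L} (hB : LocallyApproximatedBy 𝒬 B)
    (h𝒬 : ∀ P ∈ 𝒬, ∀ A : L.Substructure P.carrier, A.FG →
      dominion K P.carrier (A : Set P.carrier) = A)
    (A : L.Substructure B.carrier) :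
    dominion K B.carrier (A : Set B.carrier) = A := by
  classical
  refine Set.Subset.antisymm (fun b => ?_) (subset_dominion _)
  contrapose
  intro hbA
  refine notMem_dominion_of_finite_approx hU fun V E => ?_
  obtain ⟨P, hP, ρ, π, hπρ, hρ⟩ := hB (insert b V) E (Finset.insert_nonempty b V)
  let A₀ : L.Substructure P.carrier := Substructure.closure L (ρ '' (V ∩ A))
  have hA₀_fg : A₀.FG :=
    Substructure.fg_closure ((V.finite_toSet.inter_of_left _).image ρ)
  have hπ_mapsTo : Set.MapsTo π (ρ '' (V ∩ A)) A := by
    rintro _ ⟨y, ⟨hyV, hyA⟩, rfl⟩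
    rwa [hπρ y (Finset.mem_insert_of_mem hyV)]
  have hπb : π (ρ b) ∉ A := by
    rwa [hπρ b (Finset.mem_insert_self b V)]
  have hρb : ρ b ∉ dominion K P.carrier (A₀ : Set P.carrier) := by
    rw [h𝒬 P hP A₀ hA₀_fg]
    exact notMem_closure_of_hom π hπ_mapsTo hπb
  obtain ⟨C, hC, g, h, hgh, hne⟩ := notMem_dominion_iff.1 hρb
  exact ⟨C, hC, g ∘ ρ, h ∘ ρ, fun q hq => (hρ q hq).hom_comp g, fun q hq => (hρ q hq).hom_comp h,
    fun a ha => hgh (Substructure.subset_closure ⟨a, ha, rfl⟩), hne⟩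

theorem strongES_of_locallyApproximatedBy [L.IsAlgebraic] (hS : ClosedUnderSub K)
    (hU : ClosedUnderUprod K) {𝒬 : Set (Alg L)} (hK : ∀ B ∈ K, LocallyApproximatedBy 𝒬 B)
    (h𝒬 : ∀ P ∈ 𝒬, ∀ A : L.Substructure P.carrier, A.FG →
      dominion K P.carrier (A : Set P.carrier) = A) :
    StrongES K :=
  (strongES_iff_dominion_eq hS).2 fun B hB => (hK B hB).dominion_eq hU h𝒬

theorem locallyApproximatedBy_fg (hS : ClosedUnderSub K) {B : Alg L} (hB : B ∈ K) :
    LocallyApproximatedBy {P | P ∈ K ∧ Structure.FG L P.carrier} B := by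
  intro V E ⟨v, hv⟩
  obtain ⟨m, β, hV, hE⟩ := OpInst.exists_tuple_covering V E
  let N : L.Substructure B.carrier := Substructure.closure L (Set.range β)
  have hN_fg : N.FG := Substructure.fg_closure (Set.finite_range β)
  have hβN : Set.range β ⊆ N := Substructure.subset_closure
  have : Nonempty N := ⟨⟨v, hβN (hV hv)⟩⟩
  let ρ : B.carrier → N := Function.invFun (Subtype.val : N → B.carrier)
  have hρ : ∀ y ∈ Set.range β, (ρ y : B.carrier) = y := fun y hy =>
    Function.invFun_eq (f := (Subtype.val : N → B.carrier)) ⟨⟨y, hβN hy⟩, rfl⟩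
  refine ⟨Alg.mk N, ⟨hS.mk_mem hB N, (Substructure.fg_iff_structure_fg N).1 hN_fg⟩, ρ,
    N.subtype.toHom, fun y hy => hρ y (hV hy), fun q hq => Subtype.ext ?_⟩
  obtain ⟨hvalue, hargs⟩ := hE q hq
  have hρ_args : Subtype.val ∘ ρ ∘ q.args = q.args :=
    funext fun j => hρ _ (hargs ⟨j, rfl⟩)
  calc (ρ q.value : B.carrier) = funMap q.symbol q.args := hρ _ hvalue
    _ = funMap q.symbol (Subtype.val ∘ ρ ∘ q.args) := by rw [hρ_args]
    _ = (funMap q.symbol (ρ ∘ q.args) : N) := (N.subtype.map_fun q.symbol (ρ ∘ q.args)).symm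

end LocalApproximation

section Presentations

variable {K : Set (Alg L)} {α : Type*}

/-- The tuple `x` solves the system `Y` of equations between terms. -/
def IsSolution {M : Type*} [L.Structure M] (Y : Set (L.Term α × L.Term α)) (x : α → M) : Prop :=
  ∀ p ∈ Y, p.1.realize x = p.2.realize x

/-- The algebra `P` with generators `b` is presented in `K` by the relations `Y`: this is
`T(X)/Cg_K(Y)`, characterised by its universal property. -/
structure IsPresentedBy (K : Set (Alg L)) (Y : Set (L.Term α × L.Term α)) (P : Alg L)
    (b : α → P.carrier) : Prop where
  mem : P ∈ K
  closure_range : Substructure.closure L (Set.range b) = ⊤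
  isSolution : IsSolution Y b
  exists_hom : ∀ C ∈ K, ∀ x : α → C.carrier, IsSolution Y x →
    ∃ g : P.carrier →[L] C.carrier, ∀ i, g (b i) = x i

theorem IsPresentedBy.finitelyPresentedIn {m : ℕ} {Y : Finset (L.Term (Fin m) × L.Term (Fin m))}
    {P : Alg L} {b : Fin m → P.carrier} (h : IsPresentedBy K (Y : Set _) P b) :
    FinitelyPresentedIn K P :=
  ⟨h.mem, m, Y, b, h.closure_range, h.isSolution, h.exists_hom⟩

theorem mem_closure_range_iff_exists_term {M : Type*} [L.Structure M] {b : α → M} {y : M} :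
    y ∈ Substructure.closure L (Set.range b) ↔ ∃ t : L.Term α, t.realize b = y := by
  constructor
  · rw [Substructure.mem_closure_iff_exists_term]
    rintro ⟨t, rfl⟩
    refine ⟨t.relabel (Set.rangeSplitting b), ?_⟩
    rw [Term.realize_relabel, Set.comp_rangeSplitting]
  · rintro ⟨t, rfl⟩
    exact t.realize_mem b fun i => Substructure.subset_closure ⟨i, rfl⟩

theorem exists_hom_of_realize_eq_imp [L.IsAlgebraic] {M N : Type*} [L.Structure M] [L.Structure N]
    {b : α → M} (hb : Substructure.closure L (Set.range b) = ⊤) {x : α → N}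
    (hx : ∀ s t : L.Term α, s.realize b = t.realize b → s.realize x = t.realize x) :
    ∃ g : M →[L] N, ∀ i, g (b i) = x i := by
  have hterm : ∀ y : M, ∃ t : L.Term α, t.realize b = y := fun y =>
    mem_closure_range_iff_exists_term.1 (hb ▸ Substructure.mem_top y)
  choose τ hτ using hterm
  refine ⟨⟨fun y => (τ y).realize x, fun f v => ?_, fun r => isEmptyElim r⟩,
    fun i => hx (τ (b i)) (Term.var i) (hτ _)⟩
  refine hx (τ (funMap f v)) (Term.func f fun j => τ (v j)) ?_
  simp only [hτ, Term.realize_func]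

theorem realize_pi_apply {ι : Type u} (A : ι → Alg L) (t : L.Term α)
    (x : α → (Alg.pi A).carrier) (i : ι) : t.realize x i = t.realize fun a => x a i := by
  induction t with
  | var => rfl
  | func f ts ih => exact congrArg (funMap f) (funext ih)

theorem exists_generic_solution (hP : ClosedUnderProd K) {α : Type}
    (Y : Set (L.Term α × L.Term α)) :
    ∃ D ∈ K, ∃ p : α → D.carrier, IsSolution Y p ∧
      ∀ C ∈ K, ∀ x : α → C.carrier, IsSolution Y x →
        ∀ s t : L.Term α, s.realize p = t.realize p → s.realize x = t.realize x := by
  -- One counterexample per refutable equation suffices, so the product is indexed by a small type.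
  let ι : Type u := {e : L.Term α × L.Term α // ∃ C ∈ K, ∃ x : α → C.carrier,
    IsSolution Y x ∧ e.1.realize x ≠ e.2.realize x}
  choose D hD z hz hne using fun e : ι => e.2
  let p : α → (Alg.pi D).carrier := fun a i => z i a
  have realize_p (t : L.Term α) (i : ι) : t.realize p i = t.realize (z i) :=
    realize_pi_apply D t p i
  refine ⟨Alg.pi D, hP ι D hD, p, fun e he => funext fun i => ?_, fun C hC x hx s t hst => ?_⟩
  · rw [realize_p, realize_p]
    exact hz i e he
  · by_contra hfail
    let i : ι := ⟨(s, t), C, hC, x, hx, hfail⟩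
    apply hne i
    rw [← realize_p, ← realize_p]
    exact congrFun hst i

theorem exists_isPresentedBy [L.IsAlgebraic] (hS : ClosedUnderSub K) (hP : ClosedUnderProd K)
    {α : Type} (Y : Set (L.Term α × L.Term α)) :
    ∃ (P : Alg L) (b : α → P.carrier), IsPresentedBy K Y P b := by
  obtain ⟨D, hD, p, hp, hgeneric⟩ := exists_generic_solution hP Y
  let N : L.Substructure D.carrier := Substructure.closure L (Set.range p)
  let b : α → N := fun a => ⟨p a, Substructure.subset_closure ⟨a, rfl⟩⟩
  have coe_realize_b (t : L.Term α) : ((t.realize b : N) : D.carrier) = t.realize p :=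
    (HomClass.realize_term N.subtype (t := t) (v := b)).symm
  have hb : Substructure.closure L (Set.range b) = ⊤ := by
    refine eq_top_iff.2 fun y _ => mem_closure_range_iff_exists_term.2 ?_
    obtain ⟨t, ht⟩ := mem_closure_range_iff_exists_term.1 y.2
    exact ⟨t, Subtype.ext ((coe_realize_b t).trans ht)⟩
  refine ⟨Alg.mk N, b, hS.mk_mem hD N, hb, fun e he => Subtype.ext ?_, fun C hC x hx =>
    exists_hom_of_realize_eq_imp hb fun s t hst => hgeneric C hC x hx s t ?_⟩
  · exact (coe_realize_b e.1).trans ((hp e he).trans (coe_realize_b e.2).symm)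
  · rw [← coe_realize_b, ← coe_realize_b, hst]

theorem locallyApproximatedBy_finitelyPresentedIn [L.IsAlgebraic] (hS : ClosedUnderSub K)
    (hP : ClosedUnderProd K) {B : Alg L} (hB : B ∈ K) :
    LocallyApproximatedBy {P | FinitelyPresentedIn K P} B := by
  classical
  intro V E ⟨v, hv⟩
  obtain ⟨m, β, hV, hE⟩ := OpInst.exists_tuple_covering V E
  have : Nonempty (Fin m) := ⟨(hV hv).choose⟩
  let ν : B.carrier → Fin m := Function.invFun β
  have hβν : ∀ y ∈ Set.range β, β (ν y) = y := fun y hy => Function.invFun_eq hy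
  let relation (q : OpInst L B.carrier) : L.Term (Fin m) × L.Term (Fin m) :=
    (Term.var (ν q.value), Term.func q.symbol fun j => Term.var (ν (q.args j)))
  let Y : Finset (L.Term (Fin m) × L.Term (Fin m)) := E.image relation
  obtain ⟨P, b, hPb⟩ := exists_isPresentedBy hS hP (Y : Set (L.Term (Fin m) × L.Term (Fin m)))
  have hβ_solution : IsSolution (Y : Set (L.Term (Fin m) × L.Term (Fin m))) β := by
    intro e he
    obtain ⟨q, hq, rfl⟩ := Finset.mem_image.1 he
    have hβν_args (j) : β (ν (q.args j)) = q.args j := hβν _ ((hE q hq).2 ⟨j, rfl⟩)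
    simp only [relation, Term.realize_var, Term.realize_func, hβν _ (hE q hq).1, hβν_args]
    rfl
  obtain ⟨π, hπ⟩ := hPb.exists_hom B hB β hβ_solution
  refine ⟨P, hPb.finitelyPresentedIn, b ∘ ν, π, fun y hy => ?_, fun q hq => ?_⟩
  · exact (hπ (ν y)).trans (hβν y (hV hy))
  · exact hPb.isSolution (relation q) (Finset.mem_image_of_mem relation hq)

end Presentations

/-- For a universal class `K`: `K` has the strong epimorphism surjectivity
property iff for every pair of finitely generated algebras `A ≤ B` with `B ∈ K` the dominion
`d_K(A,B)` equals `A`; moreover, when `K` is a quasivariety, `B` may additionally be assumed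
to be finitely presented in `K`. -/
theorem statement_9 {L : FirstOrder.Language.{u, u}} [L.IsAlgebraic]
    {K : Set (Alg L)} (hK : IsUniversalClass K) :
    (StrongES K ↔
      ∀ B : Alg L, B ∈ K → Structure.FG L B.carrier →
        ∀ A : L.Substructure B.carrier, A.FG →
          dominion K B.carrier (A : Set B.carrier) = (A : Set B.carrier)) ∧
    (IsQuasivariety K →
      (StrongES K ↔
        ∀ B : Alg L, FinitelyPresentedIn K B →
          ∀ A : L.Substructure B.carrier, A.FG →
            dominion K B.carrier (A : Set B.carrier) = (A : Set B.carrier))) := by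
  obtain ⟨-, hS, hU⟩ := hK
  refine ⟨⟨fun hES B hB _ A _ => (strongES_iff_dominion_eq hS).1 hES B hB A, fun hdom => ?_⟩,
    fun ⟨_, _, hP, _⟩ =>
      ⟨fun hES B hB A _ => (strongES_iff_dominion_eq hS).1 hES B hB.1 A, fun hdom => ?_⟩⟩
  · exact strongES_of_locallyApproximatedBy hS hU
      (fun B hB => locallyApproximatedBy_fg hS hB) fun P hPK => hdom P hPK.1 hPK.2
  · exact strongES_of_locallyApproximatedBy hS hU
      (fun B hB => locallyApproximatedBy_finitelyPresentedIn hS hP hB) hdom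

end Impl
end

section
/- Let K be a quasivariety with the amalgamation property. Then K has the strong epimorphism surjectivity property if and only if K has the weak epimorphism surjectivity property. -/
namespace Impl

open FirstOrder Language

universe u v

variable {L : FirstOrder.Language.{u, u}}

/-!
Both properties speak about dominions: strong epimorphism surjectivity says that the image of a
homomorphism is its own dominion. Dominions are finitary because `K` is closed under ultraproducts.
Amalgamation makes them absolute: since `a ↦ (a, g a)` embeds `A` into `A × C` for every
homomorphism `g : A → C`, amalgamating twice turns two homomorphisms out of `A` into two
homomorphisms out of a given extension of `A` that agree on the same elements of `A`. Hence if `b`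
lies in the dominion of a subalgebra of `B`, it already lies in the dominion of a finite subset `t`
of it, computed inside the algebra generated by `t ∪ {b}`, where weak epimorphism surjectivity
applies.
-/

/-- The homomorphism into an ultraproduct induced by a family of homomorphisms into its factors. -/
def Alg.homUprod {ι : Type u} {M : Type*} [L.Structure M] (F : Ultrafilter ι) {A : ι → Alg L}
    (g : ∀ i, M →[L] (A i).carrier) : M →[L] (Alg.uprod F A).carrier where
  toFun x := Quotient.mk _ fun i => g i x
  map_fun' f x :=
    (congrArg (Quotient.mk _) (funext fun i => (g i).map_fun f x)).trans
      (Ultraproduct.funMap_cast f fun j i => g i (x j)).symm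
  map_rel' r x hx :=
    (relMap_quotient_mk' _ r fun j i => g i (x j)).2 (.of_forall fun i => (g i).map_rel r x hx)

theorem Alg.homUprod_apply_eq_iff {ι : Type u} {M : Type*} [L.Structure M] {F : Ultrafilter ι}
    {A : ι → Alg L} {g h : ∀ i, M →[L] (A i).carrier} {x : M} :
    Alg.homUprod F g x = Alg.homUprod F h x ↔ ∀ᶠ i in (F : Filter ι), g i x = h i x :=
  Quotient.eq

/-- The embedding `a ↦ (a, g a)` of an algebra into a product as the graph of a homomorphism. -/
def Alg.graphEmbedding {A B : Alg L} (g : A.carrier →[L] B.carrier) :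
    A.carrier ↪[L] (Alg.prod A B).carrier where
  toFun a := (a, g a)
  inj' _ _ h := congrArg Prod.fst h
  map_fun' f x := Prod.ext rfl (g.map_fun f x)
  map_rel' r x := ⟨And.left, fun hx => ⟨hx, g.map_rel r x hx⟩⟩

theorem Alg.graphEmbedding_apply_eq_iff {A B : Alg L} {g h : A.carrier →[L] B.carrier}
    {a : A.carrier} :
    Alg.graphEmbedding g a = Alg.graphEmbedding h a ↔ g a = h a :=
  ⟨congrArg Prod.snd, fun hgh => Prod.ext rfl hgh⟩

/-- The two-member family `A, B`, whose product `Alg.pi` is a copy of `Alg.prod A B`. The index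
type is lifted because products are indexed by types in the universe of the algebras. -/
def Alg.pair (A B : Alg L) (i : ULift.{u} Bool) : Alg L :=
  bif i.down then B else A

/-- The canonical embedding of a binary product into the product of the corresponding family. -/
def Alg.prodEmbedding (A B : Alg L) :
    (Alg.prod A B).carrier ↪[L] (Alg.pi (Alg.pair A B)).carrier where
  toFun p
    | ⟨false⟩ => p.1
    | ⟨true⟩ => p.2
  inj' _ _ h := Prod.ext (congrFun h ⟨false⟩) (congrFun h ⟨true⟩)
  map_fun' _ _ := funext fun | ⟨false⟩ => rfl | ⟨true⟩ => rfl
  map_rel' _ _ :=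
    ⟨fun hx => ⟨hx ⟨false⟩, hx ⟨true⟩⟩, fun hx => fun | ⟨false⟩ => hx.1 | ⟨true⟩ => hx.2⟩

theorem closure_coe_preimage_eq_top {L : FirstOrder.Language} {M : Type*} [L.Structure M]
    (s : Set M) :
    Substructure.closure L ((↑) ⁻¹' s : Set (Substructure.closure L s)) = ⊤ := by
  let S := Substructure.closure L s
  have hs : s ⊆ Set.range ((↑) : S → M) := by
    rw [Subtype.range_coe]
    exact Substructure.subset_closure
  apply Substructure.map_injective_of_injective (f := S.subtype.toHom) S.subtype.injective
  rw [Substructure.map_closure, ← Hom.range_eq_map, Substructure.range_subtype]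
  exact congrArg (Substructure.closure L) (Set.image_preimage_eq_of_subset hs)

variable {K : Set (Alg L)}

theorem ClosedUnderSub.coe_mem (hSub : ClosedUnderSub K) {B : Alg L} (hB : B ∈ K)
    (S : L.Substructure B.carrier) : (⟨S⟩ : Alg L) ∈ K :=
  hSub _ B hB ⟨S.subtype⟩

theorem ClosedUnderFinProd.prod_mem (hProd : ClosedUnderFinProd K) (hSub : ClosedUnderSub K)
    {A B : Alg L} (hA : A ∈ K) (hB : B ∈ K) : Alg.prod A B ∈ K :=
  hSub _ _ (hProd _ inferInstance (Alg.pair A B) fun | ⟨false⟩ => hA | ⟨true⟩ => hB)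
    ⟨Alg.prodEmbedding A B⟩

theorem strongES_iff_dominion_range_subset :
    StrongES K ↔ ∀ A B : Alg L, A ∈ K → B ∈ K → ∀ f : A.carrier →[L] B.carrier,
      dominion K B.carrier (Set.range f) ⊆ Set.range f := by
  refine forall₅_congr fun A B _ _ f => forall_congr' fun b => ?_
  rw [← not_imp_not (a := b ∈ Set.range f)]
  simp only [dominion, Set.mem_ofPred_eq, Set.forall_mem_range, not_forall, exists_prop, ne_eq]

theorem StrongES.weakES (hS : StrongES K) : WeakES K := by
  intro A B hA hB _ _ f hepi b
  exact strongES_iff_dominion_range_subset.1 hS A B hA hB f fun C hC g h hgh =>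
    DFunLike.congr_fun (hepi C hC g h (Set.forall_mem_range.1 hgh)) b

theorem ClosedUnderUprod.exists_finite_subset_mem_dominion (hUprod : ClosedUnderUprod K)
    {M : Type u} [L.Structure M] {s : Set M} {b : M} (hb : b ∈ dominion K M s) :
    ∃ t ⊆ s, t.Finite ∧ b ∈ dominion K M t := by
  by_contra! hfin
  have separated (X : Finset s) : ∃ C ∈ K, ∃ g h : M →[L] C.carrier,
      (∀ a ∈ X, g a = h a) ∧ g b ≠ h b := by
    have hX := hfin ((↑) '' (X : Set s)) (Subtype.coe_image_subset s X) (X.finite_toSet.image _)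
    simpa only [dominion, Set.mem_ofPred_eq, not_forall, exists_prop, Set.forall_mem_image,
      Finset.mem_coe] using hX
  choose C hC g h hgh hne using separated
  let F : Ultrafilter (Finset s) := Ultrafilter.of Filter.atTop
  have agree (a : M) (ha : a ∈ s) : Alg.homUprod F g a = Alg.homUprod F h a := by
    have eventually_mem : ∀ᶠ X in (F : Filter (Finset s)), ⟨a, ha⟩ ∈ X :=
      Ultrafilter.of_le _ <| (Filter.eventually_ge_atTop {⟨a, ha⟩}).mono fun X hX =>
        Finset.singleton_subset_iff.1 hX
    exact Alg.homUprod_apply_eq_iff.2 (eventually_mem.mono fun X hX => hgh X _ hX)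
  have eventually_eq : ∀ᶠ X in (F : Filter (Finset s)), g X b = h X b :=
    Alg.homUprod_apply_eq_iff.1 (hb _ (hUprod _ F C hC) _ _ agree)
  obtain ⟨X, hX⟩ := eventually_eq.exists
  exact hne X hX

theorem HasAmalgamation.exists_hom_apply_eq_iff (hAP : HasAmalgamation K)
    (hSub : ClosedUnderSub K) (hProd : ClosedUnderFinProd K) {A B C : Alg L} (hA : A ∈ K)
    (hB : B ∈ K) (hC : C ∈ K) (e : A.carrier ↪[L] B.carrier) (g h : A.carrier →[L] C.carrier) :
    ∃ D ∈ K, ∃ g' h' : B.carrier →[L] D.carrier, ∀ a, g' (e a) = h' (e a) ↔ g a = h a := by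
  obtain ⟨D, hD, i, j, hij⟩ :=
    hAP A B _ hA hB (hProd.prod_mem hSub hA hC) e (Alg.graphEmbedding g)
  obtain ⟨E, hE, k, l, hkl⟩ := hAP A B D hA hB hD e (j.comp (Alg.graphEmbedding h))
  refine ⟨E, hE, (l.comp i).toHom, k.toHom, fun a => ?_⟩
  calc l (i (e a)) = k (e a)
    _ ↔ l (j (Alg.graphEmbedding g a)) = l (j (Alg.graphEmbedding h a)) := by
      rw [hij, hkl, Embedding.comp_apply]
    _ ↔ Alg.graphEmbedding g a = Alg.graphEmbedding h a := by
      rw [l.injective.eq_iff, j.injective.eq_iff]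
    _ ↔ g a = h a := Alg.graphEmbedding_apply_eq_iff

theorem HasAmalgamation.apply_mem_dominion_image_iff (hAP : HasAmalgamation K)
    (hSub : ClosedUnderSub K) (hProd : ClosedUnderFinProd K) {A B : Alg L} (hA : A ∈ K)
    (hB : B ∈ K) (e : A.carrier ↪[L] B.carrier) {s : Set A.carrier} {a : A.carrier} :
    e a ∈ dominion K B.carrier (e '' s) ↔ a ∈ dominion K A.carrier s := by
  constructor
  · intro ha C hC g h hgh
    obtain ⟨D, hD, g', h', heq⟩ := hAP.exists_hom_apply_eq_iff hSub hProd hA hB hC e g h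
    refine (heq a).1 (ha D hD g' h' ?_)
    exact Set.forall_mem_image.2 fun x hx => (heq x).2 (hgh x hx)
  · intro ha C hC g h hgh
    exact ha C hC (g.comp e.toHom) (h.comp e.toHom) (Set.forall_mem_image.1 hgh)

theorem WeakES.mem_closure_of_mem_dominion (hW : WeakES K) (hSub : ClosedUnderSub K)
    {B : Alg L} (hB : B ∈ K) {t : Set B.carrier} (ht : t.Finite) {b : B.carrier}
    (hgen : Substructure.closure L (insert b t) = ⊤) (hb : b ∈ dominion K B.carrier t) :
    b ∈ Substructure.closure L t := by
  let S := Substructure.closure L t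
  have hS : Structure.FG L S := (Substructure.fg_iff_structure_fg S).1 (Substructure.fg_closure ht)
  have hBfg : Structure.FG L B.carrier := Structure.fg_iff.2 ⟨_, ht.insert b, hgen⟩
  have subtype_surjective : Function.Surjective S.subtype.toHom := by
    refine hW ⟨S⟩ B (hSub.coe_mem hB S) hB hS hBfg S.subtype.toHom fun C hC g h hgh => ?_
    have hgh_t : ∀ a ∈ t, g a = h a := fun a ha => hgh ⟨a, Substructure.subset_closure ha⟩
    exact Hom.eq_of_eqOn_dense hgen (Set.forall_mem_insert.2 ⟨hb C hC g h hgh_t, hgh_t⟩)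
  obtain ⟨c, rfl⟩ := subtype_surjective b
  exact c.2

theorem WeakES.dominion_subset_closure_of_finite (hW : WeakES K) (hAP : HasAmalgamation K)
    (hSub : ClosedUnderSub K) (hProd : ClosedUnderFinProd K) {B : Alg L} (hB : B ∈ K)
    {t : Set B.carrier} (ht : t.Finite) :
    dominion K B.carrier t ⊆ Substructure.closure L t := by
  intro b hb
  let T := Substructure.closure L (insert b t)
  have subset_T : insert b t ⊆ T := Substructure.subset_closure
  let c : T := ⟨b, subset_T (Set.mem_insert b t)⟩
  let t' : Set T := (↑) ⁻¹' t
  have image_t' : T.subtype '' t' = t :=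
    Subtype.image_preimage_coe _ _ |>.trans <|
      Set.inter_eq_right.2 ((Set.subset_insert b t).trans subset_T)
  have closure_insert : Substructure.closure L (insert c t') = ⊤ := by
    rw [← closure_coe_preimage_eq_top (insert b t)]
    congr 1
    ext x
    simp [c, t', T, Subtype.ext_iff]
  have hTK : (⟨T⟩ : Alg L) ∈ K := hSub.coe_mem hB T
  have hc : c ∈ dominion K T t' := by
    rw [← image_t'] at hb
    exact (hAP.apply_mem_dominion_image_iff hSub hProd hTK hB T.subtype).1 hb
  have c_mem : c ∈ Substructure.closure L t' :=
    hW.mem_closure_of_mem_dominion hSub hTK (ht.preimage Subtype.val_injective.injOn)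
      closure_insert hc
  rw [← image_t']
  exact (Substructure.map_closure T.subtype.toHom t').le ⟨c, c_mem, rfl⟩

theorem WeakES.dominion_subset (hW : WeakES K) (hAP : HasAmalgamation K)
    (hSub : ClosedUnderSub K) (hProd : ClosedUnderFinProd K) (hUprod : ClosedUnderUprod K)
    {B : Alg L} (hB : B ∈ K) (S : L.Substructure B.carrier) :
    dominion K B.carrier S ⊆ S := by
  intro b hb
  obtain ⟨t, htS, ht, hbt⟩ := hUprod.exists_finite_subset_mem_dominion hb
  exact Substructure.closure_le.2 htS
    (hW.dominion_subset_closure_of_finite hAP hSub hProd hB ht hbt)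

theorem statement_11_general (hK : IsQuasivariety K) (hAP : HasAmalgamation K) :
    StrongES K ↔ WeakES K := by
  obtain ⟨-, hSub, hProd, hUprod⟩ := hK
  refine ⟨StrongES.weakES, fun hW => strongES_iff_dominion_range_subset.2 ?_⟩
  intro A B _ hB f
  exact hW.dominion_subset hAP hSub (fun ι _ => hProd ι) hUprod hB f.range

/-- Let `K` be a quasivariety with the amalgamation property. Then `K` has
the strong epimorphism surjectivity property if and only if it has the weak epimorphism
surjectivity property. -/
theorem statement_11 {L : FirstOrder.Language.{u, u}} [L.IsAlgebraic]
    {K : Set (Alg L)} (hK : IsQuasivariety K) (hAP : HasAmalgamation K) :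
    StrongES K ↔ WeakES K :=
  statement_11_general hK hAP

end Impl
end

section
/- Let K be a universal class and A ∈ K. Then there exists B ∈ K with A ≤ B such that f^B is a total function for every extendable implicit operation f of K. Moreover, if K is a quasivariety and A is subdirectly irreducible relative to K, then B can be chosen to be subdirectly irreducible relative to K. -/
namespace Impl

open FirstOrder Language

universe u v

variable {L : FirstOrder.Language.{u, u}}

/-!
Let `ψ(x)` be the formula `∃ y, φ(x, y)` describing the domain of an extendable implicit operation.
It is preserved by homomorphisms, and each instance `ψ(a)` becomes true in some extension inside
`K`. Truth persists in further extensions, so finitely many instances over `A` become true together,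
and by Łoś's theorem a suitable ultraproduct makes all of them true together. Iterating this `ω`
times and taking the direct limit, which embeds into an ultraproduct of the chain and hence stays in
`K`, yields `B`.

If `A` is relatively subdirectly irreducible, it has a pair `a ≠ b` that is identified by every
noninjective homomorphism into a member of `K`. A maximal `K`-congruence of `B` separating `a` from
`b` exists because ultraproducts keep unions of chains of `K`-congruences inside `K`. The
corresponding quotient of `B` is relatively subdirectly irreducible, still contains `A`, and
inherits totality because it is a homomorphic image.
-/

open Structure Filter

section Constructions

variable {M : Type*} [L.Structure M] {ι : Type u}

theorem relMap_uprod_cast (F : Ultrafilter ι) (C : ι → Alg L) {n : ℕ} (r : L.Relations n)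
    (x : Fin n → ∀ i, (C i).carrier) :
    RelMap r (fun j ↦ (x j : Filter.Product (F : Filter ι) fun i ↦ (C i).carrier)) ↔
      ∀ᶠ i in F, RelMap r fun j ↦ x j i :=
  relMap_quotient_mk' _ r x

/-- The homomorphism into an ultraproduct induced by a family of maps almost all of which are
homomorphisms. -/
def uprodHom (F : Ultrafilter ι) (C : ι → Alg L) (g : ∀ i, M → (C i).carrier)
    (hg : ∀ᶠ i in F, ∃ h : M →[L] (C i).carrier, ⇑h = g i) : M →[L] (Alg.uprod F C).carrier where
  toFun x := ((fun i ↦ g i x : ∀ i, (C i).carrier) :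
    Filter.Product (F : Filter ι) fun i ↦ (C i).carrier)
  map_fun' f x := by
    refine Eq.trans (Quotient.sound' ?_)
      (Ultraproduct.funMap_cast (u := F) f fun j i ↦ g i (x j)).symm
    filter_upwards [hg] with i ⟨h, hh⟩
    exact hh ▸ h.map_fun f x
  map_rel' r x hx := by
    refine (relMap_uprod_cast F C r fun j i ↦ g i (x j)).2 ?_
    filter_upwards [hg] with i ⟨h, hh⟩
    exact hh ▸ h.map_rel r x hx

theorem uprodHom_eq_iff (F : Ultrafilter ι) (C : ι → Alg L) (g : ∀ i, M → (C i).carrier)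
    (hg : ∀ᶠ i in F, ∃ h : M →[L] (C i).carrier, ⇑h = g i) (x y : M) :
    uprodHom F C g hg x = uprodHom F C g hg y ↔ ∀ᶠ i in F, g i x = g i y :=
  Quotient.eq''

/-- The embedding into an ultraproduct induced by a family of maps almost all of which are
embeddings. -/
def uprodEmbedding (F : Ultrafilter ι) (C : ι → Alg L) (g : ∀ i, M → (C i).carrier)
    (hg : ∀ᶠ i in F, ∃ e : M ↪[L] (C i).carrier, ⇑e = g i) :
    M ↪[L] (Alg.uprod F C).carrier where
  __ := uprodHom F C g (hg.mono fun _ ⟨e, he⟩ ↦ ⟨e.toHom, he⟩)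
  inj' x y hxy := by
    obtain ⟨i, hi, e, he⟩ := (((uprodHom_eq_iff F C g _ x y).1 hxy).and hg).exists
    exact e.injective (he ▸ hi)
  map_rel' r x := by
    refine (relMap_uprod_cast F C r fun j i ↦ g i (x j)).trans ⟨fun hx ↦ ?_, fun hx ↦ ?_⟩
    · obtain ⟨i, hi, e, he⟩ := (hx.and hg).exists
      exact (e.map_rel r x).1 (he ▸ hi)
    · filter_upwards [hg] with i ⟨e, he⟩
      exact he ▸ (e.map_rel r x).2 hx

/-- The projection of a direct product onto one of its factors, as a homomorphism. -/
def piEval (C : ι → Alg L) (i : ι) : (Alg.pi C).carrier →[L] (C i).carrier where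
  toFun x := x i
  map_rel' _ _ hx := hx i

/-- The homomorphism into a direct product with the given components. -/
def piLift (C : ι → Alg L) (h : ∀ i, M →[L] (C i).carrier) : M →[L] (Alg.pi C).carrier where
  toFun x i := h i x
  map_fun' f x := funext fun i ↦ (h i).map_fun f x
  map_rel' r x hx i := (h i).map_rel r x hx

end Constructions

section DirectLimit

variable {K : Set (Alg L)}

theorem exists_embedding_directLimit {ι : Type v} [Small.{u} ι] [Preorder ι] [IsDirectedOrder ι]
    [Nonempty ι] (hU : ClosedUnderUprod K) (G : ι → Alg L) (hG : ∀ i, G i ∈ K)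
    [∀ i, Nonempty (G i).carrier] (s : ∀ i j, i ≤ j → (G i).carrier ↪[L] (G j).carrier)
    [DirectedSystem (fun i ↦ (G i).carrier) fun i j h ↦ s i j h] :
    ∃ C ∈ K, Nonempty (Language.DirectLimit (fun i ↦ (G i).carrier) s ↪[L] C.carrier) := by
  classical
  let F : Ultrafilter (Shrink.{u} ι) := (Ultrafilter.of atTop).map (equivShrink ι)
  let C : Shrink.{u} ι → Alg L := fun k ↦ G ((equivShrink ι).symm k)
  -- An element of stage `i` is represented by its images in all later stages.
  let g (i : ι) (k : Shrink.{u} ι) (a : (G i).carrier) : (C k).carrier :=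
    if h : i ≤ (equivShrink ι).symm k then s i _ h a else Classical.arbitrary _
  have g_of_le {i : ι} {k : Shrink.{u} ι} (h : i ≤ (equivShrink ι).symm k) :
      s i _ h = g i k := by
    funext a
    simp only [g, dif_pos h]
  have eventually_le (i : ι) : ∀ᶠ k in F, i ≤ (equivShrink ι).symm k := by
    refine Filter.eventually_map.2 (Ultrafilter.of_le atTop ?_)
    filter_upwards [eventually_ge_atTop i] with j hij
    rwa [Equiv.symm_apply_apply]
  let e (i : ι) := uprodEmbedding F C (g i) ((eventually_le i).mono fun _ h ↦ ⟨s i _ h, g_of_le h⟩)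
  refine ⟨Alg.uprod F C, hU _ F C fun _ ↦ hG _, ⟨Language.DirectLimit.lift L ι _ s e ?_⟩⟩
  intro i j hij a
  refine Quotient.sound' ?_
  filter_upwards [eventually_le j] with k hjk
  simp only [← g_of_le hjk, ← g_of_le (hij.trans hjk)]
  exact DirectedSystem.map_map' (f := fun i j h ↦ s i j h) hij hjk a

theorem natLERec_succ {G : ℕ → Type v} [∀ n, L.Structure (G n)] (s : ∀ n, G n ↪[L] G (n + 1))
    (m : ℕ) (x : G m) : DirectedSystem.natLERec s m (m + 1) (Nat.le_succ m) x = s m x := by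
  rw [DirectedSystem.coe_natLERec]
  exact Nat.leRecOn_succ' x

/-- The union of an `ω`-chain of embeddings, as a bundled algebra. -/
noncomputable abbrev chainLimit (G : ℕ → Alg L)
    (s : ∀ n, (G n).carrier ↪[L] (G (n + 1)).carrier) : Alg L :=
  ⟨Language.DirectLimit (fun n ↦ (G n).carrier) (DirectedSystem.natLERec s)⟩

end DirectLimit

section ExtendableFormulas

variable {K : Set (Alg L)}

/-- The formula-level counterpart of an extendable implicit operation: a formula, such as the one
describing the domain of the operation, that is preserved by homomorphisms in `K` and each instance
of which holds in some extension inside `K`. -/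
structure IsExtendableFormula (K : Set (Alg L)) {α : Type v} (ψ : L.Formula α) : Prop where
  preserved : PreservedByHomsOn K ψ
  exists_extension : ∀ A ∈ K, ∀ x : α → A.carrier,
    ∃ B ∈ K, ∃ e : A.carrier ↪[L] B.carrier, ψ.Realize (e ∘ x)

/-- `B` satisfies every instance of every extendable formula of `K`. For `B ∈ K` this makes all
extendable implicit operations of `K` total on `B`. -/
def RealizesExtendable (K : Set (Alg L)) (B : Alg L) : Prop :=
  ∀ ⦃n : ℕ⦄ (ψ : L.Formula (Fin n)), IsExtendableFormula K ψ → ∀ x : Fin n → B.carrier, ψ.Realize x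

theorem IsExtendableFormula.relabel {α β : Type*} {ψ : L.Formula α}
    (hψ : IsExtendableFormula K ψ) (g : α → β) : IsExtendableFormula K (ψ.relabel g) where
  preserved A B hA hB h x hx :=
    Formula.realize_relabel.2 (hψ.preserved A B hA hB h _ (Formula.realize_relabel.1 hx))
  exists_extension A hA x := by
    obtain ⟨B, hB, e, he⟩ := hψ.exists_extension A hA (x ∘ g)
    exact ⟨B, hB, e, Formula.realize_relabel.2 he⟩

theorem exists_embedding_realize_finset {α : Type v} {A : Alg L} (hA : A ∈ K) (x : α → A.carrier)
    (S : Finset {ψ : L.Formula α // IsExtendableFormula K ψ}) :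
    ∃ B ∈ K, ∃ e : A.carrier ↪[L] B.carrier, ∀ ψ ∈ S, ψ.1.Realize (e ∘ x) := by
  classical
  induction S using Finset.induction_on with
  | empty => exact ⟨A, hA, Embedding.refl L _, fun ψ hψ ↦ absurd hψ (Finset.notMem_empty ψ)⟩
  | insert ψ S _ ih =>
    obtain ⟨B, hB, e, he⟩ := ih
    obtain ⟨C, hC, e', he'⟩ := ψ.2.exists_extension B hB (e ∘ x)
    refine ⟨C, hC, e'.comp e, (Finset.forall_mem_insert _ _ _).2 ⟨he', fun χ hχ ↦ ?_⟩⟩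
    exact χ.2.preserved B C hB hC e'.toHom _ (he χ hχ)

theorem exists_embedding_realize_extendable (hU : ClosedUnderUprod K) {A : Alg L} (hA : A ∈ K)
    [Nonempty A.carrier] :
    ∃ B ∈ K, ∃ e : A.carrier ↪[L] B.carrier,
      ∀ ψ : L.Formula A.carrier, IsExtendableFormula K ψ → ψ.Realize e := by
  choose C hC e he using exists_embedding_realize_finset hA (id : A.carrier → A.carrier)
  let F : Ultrafilter (Finset {ψ : L.Formula A.carrier // IsExtendableFormula K ψ}) :=
    Ultrafilter.of atTop
  have C_nonempty S : Nonempty (C S).carrier := ‹Nonempty A.carrier›.map (e S)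
  refine ⟨Alg.uprod F C, hU _ F C hC,
    uprodEmbedding F C (fun S ↦ e S) (.of_forall fun S ↦ ⟨e S, rfl⟩), fun ψ hψ ↦ ?_⟩
  refine (Ultraproduct.realize_formula_cast ψ fun a S ↦ e S a).2 (Ultrafilter.of_le atTop ?_)
  filter_upwards [eventually_ge_atTop {⟨ψ, hψ⟩}] with S hS
  exact he S ⟨ψ, hψ⟩ (Finset.singleton_subset_iff.1 hS)

theorem RealizesExtendable.of_surjective {B D : Alg L} (hB : B ∈ K) (hD : D ∈ K)
    (h : RealizesExtendable K B) (g : B.carrier →[L] D.carrier) (hg : Function.Surjective g) :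
    RealizesExtendable K D := by
  intro n ψ hψ x
  obtain ⟨y, rfl⟩ := hg.comp_left x
  exact hψ.preserved B D hB hD g y (h ψ hψ y)

theorem realizesExtendable_chainLimit {G : ℕ → Alg L} (hG : ∀ n, G n ∈ K)
    (s : ∀ n, (G n).carrier ↪[L] (G (n + 1)).carrier)
    (hs : ∀ n, ∀ ψ : L.Formula (G n).carrier, IsExtendableFormula K ψ → ψ.Realize (s n))
    (hD : chainLimit G s ∈ K) : RealizesExtendable K (chainLimit G s) := by
  intro n ψ hψ x
  let ofStage := Language.DirectLimit.of L ℕ (fun n ↦ (G n).carrier) (DirectedSystem.natLERec s)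
  obtain ⟨m, y, rfl⟩ : ∃ m, ∃ y : Fin n → (G m).carrier, x = ofStage m ∘ y :=
    DirectLimit.exists_quotient_mk'_sigma_mk'_eq _ _ x
  have realize_succ : ψ.Realize (s m ∘ y) := Formula.realize_relabel.1 (hs m _ (hψ.relabel y))
  have ofStage_succ : ofStage (m + 1) ∘ s m ∘ y = ofStage m ∘ y := funext fun i ↦ by
    simp only [Function.comp_apply, ← natLERec_succ s m]
    exact Language.DirectLimit.of_f
  rw [← ofStage_succ]
  exact hψ.preserved _ _ (hG (m + 1)) hD (ofStage (m + 1)).toHom _ realize_succ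

theorem exists_embedding_realizesExtendable_of_nonempty (hS : ClosedUnderSub K)
    (hU : ClosedUnderUprod K) {A : Alg L} (hA : A ∈ K) (hne : Nonempty A.carrier) :
    ∃ B ∈ K, Nonempty (A.carrier ↪[L] B.carrier) ∧ RealizesExtendable K B := by
  have exists_next (C : {C : Alg L // C ∈ K ∧ Nonempty C.carrier}) :
      ∃ (D : {D : Alg L // D ∈ K ∧ Nonempty D.carrier}) (e : C.1.carrier ↪[L] D.1.carrier),
        ∀ ψ : L.Formula C.1.carrier, IsExtendableFormula K ψ → ψ.Realize e := by
    obtain ⟨C, hC, hCne⟩ := C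
    obtain ⟨D, hD, e, he⟩ := exists_embedding_realize_extendable hU hC
    exact ⟨⟨D, hD, hCne.map e⟩, e, he⟩
  choose next e he using exists_next
  let G : ℕ → {C : Alg L // C ∈ K ∧ Nonempty C.carrier} := Nat.rec ⟨A, hA, hne⟩ fun _ ↦ next
  let s (n : ℕ) : (G n).1.carrier ↪[L] (G (n + 1)).1.carrier := e (G n)
  have G_nonempty n : Nonempty (G n).1.carrier := (G n).2.2
  obtain ⟨C, hC, hGC⟩ := exists_embedding_directLimit hU (fun n ↦ (G n).1) (fun n ↦ (G n).2.1)
    (DirectedSystem.natLERec s)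
  have hD : chainLimit (fun n ↦ (G n).1) s ∈ K := hS _ C hC hGC
  exact ⟨_, hD, ⟨Language.DirectLimit.of L ℕ (fun n ↦ (G n).1.carrier) _ 0⟩,
    realizesExtendable_chainLimit (fun n ↦ (G n).2.1) s (fun n ↦ he (G n)) hD⟩

theorem exists_embedding_realizesExtendable (hS : ClosedUnderSub K) (hU : ClosedUnderUprod K)
    {A : Alg L} (hA : A ∈ K) :
    ∃ B ∈ K, Nonempty (A.carrier ↪[L] B.carrier) ∧ RealizesExtendable K B := by
  by_cases hC : ∃ C ∈ K, Nonempty C.carrier ∧ Nonempty (A.carrier ↪[L] C.carrier)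
  · obtain ⟨C, hC, hCne, ⟨e⟩⟩ := hC
    obtain ⟨B, hB, ⟨e'⟩, hBext⟩ := exists_embedding_realizesExtendable_of_nonempty hS hU hC hCne
    exact ⟨B, hB, ⟨e'.comp e⟩, hBext⟩
  · -- Every extension of `A` in `K` is empty, hence isomorphic to `A`.
    refine ⟨A, hA, ⟨Embedding.refl L _⟩, fun n ψ hψ x ↦ ?_⟩
    obtain ⟨C, hC', e, he⟩ := hψ.exists_extension A hA x
    have C_empty : IsEmpty C.carrier := not_nonempty_iff.1 fun hne ↦ hC ⟨C, hC', hne, ⟨e⟩⟩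
    let iso : A.carrier ≃[L] C.carrier :=
      ⟨Equiv.ofBijective e ⟨e.injective, isEmptyElim⟩, e.map_fun', e.map_rel'⟩
    exact (StrongHomClass.realize_formula iso ψ).1 he

end ExtendableFormulas

section ImplicitOperations

variable {K : Set (Alg L)} {n : ℕ}

/-- The formula `∃ y, φ(x₁, …, xₙ, y)`, which describes the domain of the partial function defined
by `φ`. -/
noncomputable def domFormula (φ : L.Formula (Fin (n + 1))) : L.Formula (Fin n) :=
  (φ.relabel (finSumFinEquiv (m := n) (n := 1)).symm).iExs (Fin 1)

theorem realize_domFormula {M : Type*} [L.Structure M] {φ : L.Formula (Fin (n + 1))}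
    {x : Fin n → M} :
    (domFormula φ).Realize x ↔ ∃ b, φ.Realize (Fin.snoc x b : Fin (n + 1) → M) := by
  have elim_eq_snoc (y : Fin 1 → M) :
      Sum.elim x y ∘ (finSumFinEquiv (m := n) (n := 1)).symm = Fin.snoc x (y 0) := by
    refine (Equiv.comp_symm_eq _ _ _).2 (funext fun j ↦ ?_)
    rcases j with i | i
    · exact (Fin.snoc_castSucc (α := fun _ ↦ M) (y 0) x i).symm
    · rw [Subsingleton.elim i 0]
      exact (Fin.snoc_last (α := fun _ ↦ M) (y 0) x).symm
  simp only [domFormula, Formula.realize_iExs, Formula.realize_relabel, elim_eq_snoc]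
  exact ⟨fun ⟨y, hy⟩ ↦ ⟨y 0, hy⟩, fun ⟨b, hb⟩ ↦ ⟨fun _ ↦ b, hb⟩⟩

theorem DefinedBy.dom_iff_realize {f : PartialFunOn K n} {φ : L.Formula (Fin (n + 1))}
    (hφ : DefinedBy f φ) {A : Alg L} (hA : A ∈ K) (x : Fin n → A.carrier) :
    (f A hA x).Dom ↔ (domFormula φ).Realize x := by
  simp only [Part.dom_iff_mem, realize_domFormula, hφ A hA x]

theorem DefinedBy.isExtendableFormula_domFormula {f : PartialFunOn K n}
    {φ : L.Formula (Fin (n + 1))} (hφ : DefinedBy f φ) (hop : IsOperationOn f)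
    (hext : Extendable f) : IsExtendableFormula K (domFormula φ) where
  preserved A B hA hB h x hx := by
    obtain ⟨b, hb⟩ := Part.dom_iff_mem.1 ((hφ.dom_iff_realize hA x).2 hx)
    exact (hφ.dom_iff_realize hB _).1 (Part.dom_iff_mem.2 ⟨h b, hop A B hA hB h x b hb⟩)
  exists_extension A hA x := by
    obtain ⟨B, hB, e, hdom⟩ := hext A hA x
    exact ⟨B, hB, e, (hφ.dom_iff_realize hB _).1 hdom⟩

theorem RealizesExtendable.dom {B : Alg L} (h : RealizesExtendable K B) (hB : B ∈ K)
    {f : PartialFunOn K n} (hf : IsImplicitOp f) (hext : Extendable f) (x : Fin n → B.carrier) :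
    (f B hB x).Dom := by
  obtain ⟨⟨φ, hφ⟩, hop⟩ := hf
  exact (hφ.dom_iff_realize hB x).2 (h _ (hφ.isExtendableFormula_domFormula hop hext) x)

end ImplicitOperations

section RelativeCongruences

variable {K : Set (Alg L)}

/-- The `K`-congruences of `A`, described as the kernels of homomorphisms into members of `K`. -/
def relKernels (K : Set (Alg L)) (A : Alg L) : Set (Setoid A.carrier) :=
  { θ | ∃ C ∈ K, ∃ h : A.carrier →[L] C.carrier, Setoid.ker h = θ }

/-- A pair of distinct elements generating the monolith of the `K`-congruences of `A`: every
homomorphism into a member of `K` that separates it is injective. -/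
def IsCriticalPair (K : Set (Alg L)) (A : Alg L) (a b : A.carrier) : Prop :=
  a ≠ b ∧ ∀ C ∈ K, ∀ h : A.carrier →[L] C.carrier, h a ≠ h b → Function.Injective h

theorem exists_surjective_ker_eq (hS : ClosedUnderSub K) {A : Alg L} {θ : Setoid A.carrier}
    (hθ : θ ∈ relKernels K A) :
    ∃ D ∈ K, ∃ g : A.carrier →[L] D.carrier, Function.Surjective g ∧ Setoid.ker g = θ := by
  obtain ⟨C, hC, h, rfl⟩ := hθ
  refine ⟨⟨h.range⟩, hS _ C hC ⟨h.range.subtype⟩, h.codRestrict h.range h.mem_range_self, ?_, ?_⟩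
  · rintro ⟨_, x, rfl⟩
    exact ⟨x, rfl⟩
  · exact Setoid.ext fun x y ↦ Subtype.ext_iff

theorem exists_mem_relKernels_rel_iff_of_directedOn (hU : ClosedUnderUprod K) {A : Alg L}
    {c : Set (Setoid A.carrier)} (hcK : c ⊆ relKernels K A) (hne : c.Nonempty)
    (hdir : DirectedOn (· ≤ ·) c) :
    ∃ θ ∈ relKernels K A, ∀ x y, θ x y ↔ ∃ ρ ∈ c, ρ x y := by
  choose C hC h hker using fun ρ : c ↦ hcK ρ.2
  have rel_iff (ρ : c) (x y : A.carrier) : ρ.1 x y ↔ h ρ x = h ρ y := by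
    rw [← hker ρ, Setoid.ker_def]
  have : Nonempty c := hne.to_subtype
  have : IsDirectedOrder c := ⟨directedOn_iff_directed.1 hdir⟩
  let F : Ultrafilter c := Ultrafilter.of atTop
  let k := uprodHom F C (fun ρ ↦ h ρ) (.of_forall fun ρ ↦ ⟨h ρ, rfl⟩)
  refine ⟨Setoid.ker k, ⟨_, hU _ F C hC, k, rfl⟩, fun x y ↦ ?_⟩
  rw [Setoid.ker_def, uprodHom_eq_iff]
  refine ⟨fun hxy ↦ ?_, fun ⟨ρ, hρ, hxy⟩ ↦ Ultrafilter.of_le atTop ?_⟩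
  · obtain ⟨ρ, hρ⟩ := hxy.exists
    exact ⟨ρ, ρ.2, (rel_iff ρ x y).2 hρ⟩
  · filter_upwards [eventually_ge_atTop ⟨ρ, hρ⟩] with σ hσ
    exact (rel_iff σ x y).1 (hσ hxy)

theorem exists_maximal_relKernel_not_rel (hU : ClosedUnderUprod K) {A : Alg L} (hA : A ∈ K)
    {a b : A.carrier} (hab : a ≠ b) :
    ∃ θ, Maximal (fun θ ↦ θ ∈ relKernels K A ∧ ¬ θ a b) θ := by
  suffices chain_bound : ∀ c ⊆ {θ | θ ∈ relKernels K A ∧ ¬ θ a b}, IsChain (· ≤ ·) c → ∀ ρ ∈ c,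
      ∃ θ ∈ {θ | θ ∈ relKernels K A ∧ ¬ θ a b}, ∀ σ ∈ c, σ ≤ θ by
    obtain ⟨θ, -, hθ⟩ := zorn_le_nonempty₀ _ chain_bound (Setoid.ker (Hom.id L A.carrier))
      ⟨⟨A, hA, _, rfl⟩, hab⟩
    exact ⟨θ, hθ⟩
  intro c hc hchain ρ hρ
  obtain ⟨θ, hθ, rel_iff⟩ := exists_mem_relKernels_rel_iff_of_directedOn hU
    (fun σ hσ ↦ (hc hσ).1) ⟨ρ, hρ⟩ hchain.directedOn
  refine ⟨θ, ⟨hθ, fun h ↦ ?_⟩, fun σ hσ x y hxy ↦ (rel_iff x y).2 ⟨σ, hσ, hxy⟩⟩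
  obtain ⟨σ, hσ, hσab⟩ := (rel_iff a b).1 h
  exact (hc hσ).2 hσab

theorem exists_surjective_isCriticalPair (hS : ClosedUnderSub K) (hU : ClosedUnderUprod K)
    {A : Alg L} (hA : A ∈ K) {a b : A.carrier} (hab : a ≠ b) :
    ∃ D ∈ K, ∃ g : A.carrier →[L] D.carrier,
      Function.Surjective g ∧ IsCriticalPair K D (g a) (g b) := by
  obtain ⟨θ, ⟨hθ, hθab⟩, hmax⟩ := exists_maximal_relKernel_not_rel hU hA hab
  obtain ⟨D, hD, g, hg, rfl⟩ := exists_surjective_ker_eq hS hθ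
  refine ⟨D, hD, g, hg, hθab, fun E hE k hk ↦ ?_⟩
  have ker_comp_le : Setoid.ker (k.comp g) ≤ Setoid.ker g :=
    hmax ⟨⟨E, hE, _, rfl⟩, hk⟩ fun x y hxy ↦ congrArg k hxy
  intro x y hxy
  obtain ⟨x, rfl⟩ := hg x
  obtain ⟨y, rfl⟩ := hg y
  exact ker_comp_le hxy

theorem IsCriticalPair.isRSI {A : Alg L} (hA : A ∈ K) {a b : A.carrier}
    (hab : IsCriticalPair K A a b) : IsRSI K A := by
  refine ⟨hA, fun ι B hB h hsurj ↦ ?_⟩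
  obtain ⟨i, hi⟩ := Function.ne_iff.1 (h.injective.ne hab.1)
  exact ⟨i, hab.2 (B i) (hB i) ((piEval B i).comp h.toHom) hi, hsurj i⟩

theorem IsRSI.exists_isCriticalPair [L.IsAlgebraic] (hS : ClosedUnderSub K) {A : Alg L}
    (hA : IsRSI K A) : ∃ a b, IsCriticalPair K A a b := by
  by_contra! hcrit
  have exists_separating (p : {p : A.carrier × A.carrier // p.1 ≠ p.2}) :
      ∃ D ∈ K, ∃ g : A.carrier →[L] D.carrier,
        Function.Surjective g ∧ g p.1.1 ≠ g p.1.2 ∧ ¬ Function.Injective g := by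
    obtain ⟨⟨a, b⟩, hab⟩ := p
    obtain ⟨C, hC, h, hne, hninj⟩ : ∃ C ∈ K, ∃ h : A.carrier →[L] C.carrier,
        h a ≠ h b ∧ ¬ Function.Injective h := by
      by_contra! hinj
      exact hcrit a b ⟨hab, hinj⟩
    obtain ⟨D, hD, g, hg, hker⟩ := exists_surjective_ker_eq hS ⟨C, hC, h, rfl⟩
    have eq_iff (x y : A.carrier) : g x = g y ↔ h x = h y := by
      rw [← Setoid.ker_def, hker, Setoid.ker_def]
    exact ⟨D, hD, g, hg, (eq_iff a b).not.2 hne,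
      fun hinj ↦ hninj fun x y hxy ↦ hinj ((eq_iff x y).2 hxy)⟩
  choose D hD g hg hsep hninj using exists_separating
  have hinj : Function.Injective (piLift D g) := fun x y hxy ↦ by
    by_contra hne
    exact hsep ⟨(x, y), hne⟩ (congrFun hxy ⟨(x, y), hne⟩)
  obtain ⟨p, hp⟩ := hA.2 _ D hD (Embedding.ofInjective hinj) hg
  exact hninj p hp.injective

theorem IsRSI.exists_embedding_isRSI_realizesExtendable [L.IsAlgebraic] (hS : ClosedUnderSub K)
    (hU : ClosedUnderUprod K) {A : Alg L} (hA : IsRSI K A) :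
    ∃ B, IsRSI K B ∧ Nonempty (A.carrier ↪[L] B.carrier) ∧ RealizesExtendable K B := by
  obtain ⟨B, hB, ⟨e⟩, hBext⟩ := exists_embedding_realizesExtendable hS hU hA.1
  obtain ⟨a, b, hab⟩ := hA.exists_isCriticalPair hS
  obtain ⟨D, hD, g, hg, hcrit⟩ := exists_surjective_isCriticalPair hS hU hB (e.injective.ne hab.1)
  have hinj : Function.Injective (g.comp e.toHom) := hab.2 D hD _ hcrit.1
  exact ⟨D, hcrit.isRSI hD, ⟨Embedding.ofInjective hinj⟩, hBext.of_surjective hB hD g hg⟩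

end RelativeCongruences

theorem statement_13_general {K : Set (Alg L)} (hK : IsUniversalClass K) (A : Alg L) (hA : A ∈ K) :
    (∃ (B : Alg L) (hB : B ∈ K), Nonempty (A.carrier ↪[L] B.carrier) ∧
      ∀ (n : ℕ) (f : PartialFunOn K n), IsImplicitOp f → Extendable f →
        ∀ x : Fin n → B.carrier, (f B hB x).Dom) ∧
    ([L.IsAlgebraic] → IsRSI K A →
      ∃ (B : Alg L) (hB : B ∈ K), Nonempty (A.carrier ↪[L] B.carrier) ∧ IsRSI K B ∧
        ∀ (n : ℕ) (f : PartialFunOn K n), IsImplicitOp f → Extendable f →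
          ∀ x : Fin n → B.carrier, (f B hB x).Dom) := by
  obtain ⟨-, hS, hU⟩ := hK
  refine ⟨?_, fun hrsi ↦ ?_⟩
  · obtain ⟨B, hB, hAB, hBext⟩ := exists_embedding_realizesExtendable hS hU hA
    exact ⟨B, hB, hAB, fun _ _ ↦ hBext.dom hB⟩
  · obtain ⟨B, hB, hAB, hBext⟩ := hrsi.exists_embedding_isRSI_realizesExtendable hS hU
    exact ⟨B, hB.1, hAB, hB, fun _ _ ↦ hBext.dom hB.1⟩

/-- Let `K` be a universal class and `A ∈ K`. Then there exists `B ∈ K`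
extending `A` on which every extendable implicit operation of `K` is total; moreover, if `K`
is a quasivariety and `A` is subdirectly irreducible relative to `K`, then `B` can be chosen
subdirectly irreducible relative to `K`. -/
theorem statement_13 {L : FirstOrder.Language.{u, u}} [L.IsAlgebraic]
    {K : Set (Alg L)} (hK : IsUniversalClass K) (A : Alg L) (hA : A ∈ K) :
    (∃ (B : Alg L) (hB : B ∈ K), Nonempty (A.carrier ↪[L] B.carrier) ∧
      ∀ n : ℕ, 0 < n → ∀ f : PartialFunOn K n, IsImplicitOp f → Extendable f →
        ∀ x : Fin n → B.carrier, (f B hB x).Dom) ∧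
    (IsQuasivariety K → IsRSI K A →
      ∃ (B : Alg L) (hB : B ∈ K), Nonempty (A.carrier ↪[L] B.carrier) ∧ IsRSI K B ∧
        ∀ n : ℕ, 0 < n → ∀ f : PartialFunOn K n, IsImplicitOp f → Extendable f →
          ∀ x : Fin n → B.carrier, (f B hB x).Dom) := by
  obtain ⟨⟨B, hB, hAB, htotal⟩, of_isRSI⟩ := statement_13_general hK A hA
  refine ⟨⟨B, hB, hAB, fun n _ ↦ htotal n⟩, fun _ hrsi ↦ ?_⟩
  obtain ⟨D, hD, hAD, hDrsi, htotal⟩ := of_isRSI hrsi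
  exact ⟨D, hD, hAD, hDrsi, fun n _ ↦ htotal n⟩

end Impl
end
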